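/- Let μ be a positive Borel measure on [1,∞), δ ∈ (0,1) and C > 0 be such that ∫_{[1,∞)} e^{−tx} dμ(x) ≤ C t^{−1} for all t ∈ (0,δ]. Then there exists C′ > 0 such that ∫_{[1,∞)} e^{−tx} x^{−1} dμ(x) ≤ C′ (−log t) for all t ∈ (0,δ]. -/

import Mathlib

open MeasureTheory Filter Real Set

/-! Dividing by `x` under a Laplace transform amounts to integrating in `t`: for `x > 0`,
`e^{-tx} x⁻¹ = e^{-δx} x⁻¹ + ∫_t^δ e^{-sx} ds`. Integrate this against `μ`, which is σ-finite because
`L(μ)(δ) < ∞`. By Tonelli the last term becomes `∫_t^δ L(μ)(s) ds ≤ C ∫_t^δ s⁻¹ ds = C log (δ / t)`,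
while the first is at most `L(μ)(δ) ≤ C δ⁻¹` as `x ≥ 1`, a constant that `-log t ≥ -log δ > 0`
absorbs. -/

/-- The Laplace transform `L(ν)(t) = ∫ e^{-tx} dν(x)` of a measure on `ℝ`, as a Lebesgue integral
with values in `[0, ∞]`, so that it is meaningful without any integrability condition. -/
noncomputable def laplaceTransform (ν : Measure ℝ) (t : ℝ) : ENNReal :=
  ∫⁻ x, ENNReal.ofReal (exp (-t * x)) ∂ν

lemma sigmaFinite_of_lintegral_ne_top {α : Type*} [MeasurableSpace α] {ν : Measure α}
    {f : α → ENNReal} (hf : AEMeasurable f ν) (hf_ne_zero : ∀ᵐ x ∂ν, f x ≠ 0)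
    (hf_int : ∫⁻ x, f x ∂ν ≠ ⊤) : SigmaFinite ν := by
  have hf_ne_top : ∀ᵐ x ∂ν, f x ≠ ⊤ := (ae_lt_top' hf hf_int).mono fun _ hx => hx.ne
  have : IsFiniteMeasure (ν.withDensity f) := isFiniteMeasure_withDensity hf_int
  rw [← withDensity_inv_same₀ hf hf_ne_zero hf_ne_top]
  refine SigmaFinite.withDensity_of_ne_top ?_
  filter_upwards [(withDensity_absolutelyContinuous ν f).ae_le hf_ne_zero] with x hx
  exact ENNReal.inv_ne_top.2 hx

lemma sigmaFinite_of_laplaceTransform_ne_top {ν : Measure ℝ} {t : ℝ}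
    (ht : laplaceTransform ν t ≠ ⊤) : SigmaFinite ν :=
  sigmaFinite_of_lintegral_ne_top (by fun_prop)
    (.of_forall fun x => (ENNReal.ofReal_pos.2 (exp_pos (-t * x))).ne') ht

section KernelIntegrals

variable {a b : ℝ}

lemma setLIntegral_Ioc_ofReal_eq_ofReal_intervalIntegral {f : ℝ → ℝ} (hab : a ≤ b)
    (hf : IntervalIntegrable f volume a b) (hf_nonneg : ∀ x ∈ Ioc a b, 0 ≤ f x) :
    ∫⁻ x in Ioc a b, ENNReal.ofReal (f x) = ENNReal.ofReal (∫ x in a..b, f x) := by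
  rw [intervalIntegral.integral_of_le hab, ofReal_integral_eq_lintegral_ofReal hf.1
    (ae_restrict_of_forall_mem measurableSet_Ioc hf_nonneg)]

lemma setLIntegral_Ioc_const_mul_inv (ha : 0 < a) (hab : a ≤ b) (c : ℝ) :
    ∫⁻ s in Ioc a b, ENNReal.ofReal (c * s⁻¹) = ENNReal.ofReal (c * log (b / a)) := by
  have hb : 0 < b := ha.trans_le hab
  have h_int : IntervalIntegrable (fun s : ℝ => s⁻¹) volume a b :=
    intervalIntegrable_inv_iff.2 (.inr (notMem_uIcc_of_lt ha hb))
  have h_nonneg : ∀ s ∈ Ioc a b, 0 ≤ s⁻¹ := fun s hs => inv_nonneg.2 (ha.trans hs.1).le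
  calc ∫⁻ s in Ioc a b, ENNReal.ofReal (c * s⁻¹)
      = ∫⁻ s in Ioc a b, ENNReal.ofReal c * ENNReal.ofReal s⁻¹ :=
        setLIntegral_congr_fun measurableSet_Ioc fun s hs => ENNReal.ofReal_mul' (h_nonneg s hs)
    _ = ENNReal.ofReal c * ENNReal.ofReal (log (b / a)) := by
        rw [lintegral_const_mul _ (by fun_prop),
          setLIntegral_Ioc_ofReal_eq_ofReal_intervalIntegral hab h_int h_nonneg,
          integral_inv_of_pos ha hb]
    _ = ENNReal.ofReal (c * log (b / a)) :=
        (ENNReal.ofReal_mul' (log_nonneg ((one_le_div ha).2 hab))).symm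

lemma intervalIntegral_exp_neg_mul {x : ℝ} (hx : x ≠ 0) :
    ∫ s in a..b, exp (-s * x) = exp (-a * x) * x⁻¹ - exp (-b * x) * x⁻¹ := by
  simp only [neg_mul_comm]
  rw [intervalIntegral.integral_comp_mul_right exp (neg_ne_zero.2 hx), integral_exp, smul_eq_mul,
    inv_neg]
  ring

lemma ofReal_exp_neg_mul_inv_eq_add_setLIntegral {x : ℝ} (hx : 0 < x) (hab : a ≤ b) :
    ENNReal.ofReal (exp (-a * x) * x⁻¹) = ENNReal.ofReal (exp (-b * x) * x⁻¹) +
      ∫⁻ s in Ioc a b, ENNReal.ofReal (exp (-s * x)) := by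
  rw [setLIntegral_Ioc_ofReal_eq_ofReal_intervalIntegral hab
      (Continuous.intervalIntegrable (by fun_prop) a b) (fun s _ => (exp_pos _).le),
    ← ENNReal.ofReal_add (by positivity)
      (intervalIntegral.integral_nonneg hab fun s _ => (exp_pos _).le),
    intervalIntegral_exp_neg_mul hx.ne', add_sub_cancel]

end KernelIntegrals

section LaplaceTransform

variable {ν : Measure ℝ} {r t δ C : ℝ}

lemma lintegral_lintegral_exp_neg_mul_eq_lintegral_laplaceTransform [SFinite ν]
    (ρ : Measure ℝ) [SFinite ρ] :
    ∫⁻ x, ∫⁻ s, ENNReal.ofReal (exp (-s * x)) ∂ρ ∂ν = ∫⁻ s, laplaceTransform ν s ∂ρ :=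
  lintegral_lintegral_swap (by unfold Function.uncurry; fun_prop)

lemma lintegral_exp_neg_mul_inv_eq_add [SFinite ν] (hν : ∀ᵐ x ∂ν, 0 < x) (htδ : t ≤ δ) :
    ∫⁻ x, ENNReal.ofReal (exp (-t * x) * x⁻¹) ∂ν =
      ∫⁻ x, ENNReal.ofReal (exp (-δ * x) * x⁻¹) ∂ν +
        ∫⁻ s in Ioc t δ, laplaceTransform ν s :=
  calc ∫⁻ x, ENNReal.ofReal (exp (-t * x) * x⁻¹) ∂ν
      = ∫⁻ x, (ENNReal.ofReal (exp (-δ * x) * x⁻¹) +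
          ∫⁻ s in Ioc t δ, ENNReal.ofReal (exp (-s * x))) ∂ν :=
        lintegral_congr_ae <| hν.mono fun x hx =>
          ofReal_exp_neg_mul_inv_eq_add_setLIntegral hx htδ
    _ = ∫⁻ x, ENNReal.ofReal (exp (-δ * x) * x⁻¹) ∂ν +
          ∫⁻ x, ∫⁻ s in Ioc t δ, ENNReal.ofReal (exp (-s * x)) ∂volume ∂ν :=
        lintegral_add_left (by fun_prop) _
    _ = ∫⁻ x, ENNReal.ofReal (exp (-δ * x) * x⁻¹) ∂ν +
          ∫⁻ s in Ioc t δ, laplaceTransform ν s := by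
        rw [lintegral_lintegral_exp_neg_mul_eq_lintegral_laplaceTransform]

lemma lintegral_exp_neg_mul_inv_le (hr : 0 < r) (hν : ∀ᵐ x ∂ν, r ≤ x) (t : ℝ) :
    ∫⁻ x, ENNReal.ofReal (exp (-t * x) * x⁻¹) ∂ν ≤
      laplaceTransform ν t * ENNReal.ofReal r⁻¹ := by
  rw [laplaceTransform, ← lintegral_mul_const _ (by fun_prop)]
  refine lintegral_mono_ae (hν.mono fun x hx => ?_)
  rw [← ENNReal.ofReal_mul (exp_pos _).le]
  gcongr

lemma lintegral_exp_neg_mul_inv_le_of_laplaceTransform_le (hr : 0 < r) (hν : ∀ᵐ x ∂ν, r ≤ x)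
    (hC : 0 ≤ C) (ht : 0 < t) (htδ : t ≤ δ)
    (hbound : ∀ s ∈ Icc t δ, laplaceTransform ν s ≤ ENNReal.ofReal (C * s⁻¹)) :
    ∫⁻ x, ENNReal.ofReal (exp (-t * x) * x⁻¹) ∂ν ≤
      ENNReal.ofReal (C * ((δ * r)⁻¹ + log (δ / t))) := by
  have hδ : 0 < δ := ht.trans_le htδ
  have hboundδ : laplaceTransform ν δ ≤ ENNReal.ofReal (C * δ⁻¹) := hbound δ ⟨htδ, le_rfl⟩
  have : SigmaFinite ν :=
    sigmaFinite_of_laplaceTransform_ne_top (ne_top_of_le_ne_top ENNReal.ofReal_ne_top hboundδ)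
  have hlog : 0 ≤ log (δ / t) := log_nonneg ((one_le_div ht).2 htδ)
  calc ∫⁻ x, ENNReal.ofReal (exp (-t * x) * x⁻¹) ∂ν
      = ∫⁻ x, ENNReal.ofReal (exp (-δ * x) * x⁻¹) ∂ν +
          ∫⁻ s in Ioc t δ, laplaceTransform ν s :=
        lintegral_exp_neg_mul_inv_eq_add (hν.mono fun x hx => hr.trans_le hx) htδ
    _ ≤ laplaceTransform ν δ * ENNReal.ofReal r⁻¹ +
          ∫⁻ s in Ioc t δ, ENNReal.ofReal (C * s⁻¹) :=
        add_le_add (lintegral_exp_neg_mul_inv_le hr hν δ) <|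
          setLIntegral_mono' measurableSet_Ioc fun s hs => hbound s (Ioc_subset_Icc_self hs)
    _ ≤ ENNReal.ofReal (C * δ⁻¹) * ENNReal.ofReal r⁻¹ + ENNReal.ofReal (C * log (δ / t)) := by
        rw [setLIntegral_Ioc_const_mul_inv ht htδ]
        gcongr
    _ = ENNReal.ofReal (C * ((δ * r)⁻¹ + log (δ / t))) := by
        rw [← ENNReal.ofReal_mul (by positivity), ← ENNReal.ofReal_add (by positivity)
          (by positivity), mul_inv, mul_add, mul_assoc]

end LaplaceTransform

lemma add_log_div_le_mul_neg_log {c t δ : ℝ} (hc : 0 ≤ c) (ht : 0 < t) (htδ : t ≤ δ)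
    (hδ : δ < 1) : c + log (δ / t) ≤ (c / -log δ + 1) * -log t := by
  have hδ_pos : 0 < δ := ht.trans_le htδ
  have hlogδ : 0 < -log δ := neg_pos.2 (log_neg hδ_pos hδ)
  have hlog : -log δ ≤ -log t := neg_le_neg (log_le_log ht htδ)
  have hc_le : c ≤ c / -log δ * -log t :=
    calc c = c / -log δ * -log δ := (div_mul_cancel₀ c hlogδ.ne').symm
      _ ≤ c / -log δ * -log t := by gcongr
  rw [log_div hδ_pos.ne' ht.ne']
  linarith

/-- If `μ` is a positive Borel measure on `[1,∞)`, `δ ∈ (0,1)` and `C > 0` with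
`∫_{[1,∞)} e^{-tx} dμ(x) ≤ C t⁻¹` for all `t ∈ (0,δ]`, then there exists `C' > 0` with
`∫_{[1,∞)} e^{-tx} x⁻¹ dμ(x) ≤ C' (-log t)` for all `t ∈ (0,δ]`. -/
theorem laplace_log_bound (μ : Measure ℝ) (hμ : μ (Set.Iio 1) = 0)
    (δ : ℝ) (hδ : δ ∈ Set.Ioo (0:ℝ) 1) (C : ℝ) (hC : 0 < C)
    (hbound : ∀ t ∈ Set.Ioc 0 δ,
      ∫⁻ x in Set.Ici (1:ℝ), ENNReal.ofReal (Real.exp (-t * x)) ∂μ ≤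
        ENNReal.ofReal (C * t⁻¹)) :
    ∃ C' : ℝ, 0 < C' ∧ ∀ t ∈ Set.Ioc 0 δ,
      ∫⁻ x in Set.Ici (1:ℝ), ENNReal.ofReal (Real.exp (-t * x) * x⁻¹) ∂μ ≤
        ENNReal.ofReal (C' * (-Real.log t)) := by
  obtain ⟨hδ_pos, hδ_lt_one⟩ := hδ
  have hlogδ : 0 < -log δ := neg_pos.2 (log_neg hδ_pos hδ_lt_one)
  refine ⟨C * (δ⁻¹ / -log δ + 1), by positivity, fun t ⟨ht, htδ⟩ => ?_⟩
  calc ∫⁻ x in Ici 1, ENNReal.ofReal (exp (-t * x) * x⁻¹) ∂μ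
      ≤ ENNReal.ofReal (C * (δ⁻¹ + log (δ / t))) := by
        simpa only [mul_one] using lintegral_exp_neg_mul_inv_le_of_laplaceTransform_le one_pos
          (ae_restrict_mem (s := Ici 1) measurableSet_Ici) hC.le ht htδ
          fun s hs => hbound s ⟨ht.trans_le hs.1, hs.2⟩
    _ ≤ ENNReal.ofReal (C * (δ⁻¹ / -log δ + 1) * -log t) := by
        rw [mul_assoc]
        gcongr
        exact add_log_div_le_mul_neg_log (by positivity) ht htδ hδ_lt_one
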